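/- Let a < b and V = ℝ^{n-1} × (a,b). There exists a constant c > 0, depending only on b − a and n, such that for all f ∈ H¹(V; ℝⁿ) whose trace on ℝ^{n-1} × {a} vanishes, one has ‖f‖_{L²(V)} + ‖∇f‖_{L²(V)} ≤ c ‖𝔻f‖_{L²(V)}, where 𝔻f = ∇f + (∇f)ᵀ is the symmetrized gradient. -/

import Mathlib

open MeasureTheory

/-- The partial derivative `∂_j (f · e_i)` of a vector field on `ℝⁿ`. -/
noncomputable def pderivK {n : ℕ} (f : EuclideanSpace ℝ (Fin n) → EuclideanSpace ℝ (Fin n))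
    (i j : Fin n) (x : EuclideanSpace ℝ (Fin n)) : ℝ :=
  fderiv ℝ (fun y => f y i) x (EuclideanSpace.single j 1)

/-!
On the whole space, integrating by parts twice gives `⟪∂ⱼuᵢ, ∂ᵢuⱼ⟫ = ⟪∂ᵢuᵢ, ∂ⱼuⱼ⟫` (for `L²`
difference quotients this is translation invariance of the inner product), and so
`‖∇u + (∇u)ᵀ‖² = 2 ‖∇u‖² + 2 ‖div u‖² ≥ 2 ‖∇u‖²`.

A field on the slab that vanishes at the bottom is extended by zero below and, following Nitsche,
by `3 R₁ - 2 R₂` above, where `Rᵣ` pulls back a tensor field along the reflection across the top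
that stretches the normal direction by `r`, so that its `m`-components are multiplied by
`κ r = -r` and the others by `κ r = 1`. Since `3 κ 1 - 2 κ 2 = 1` in both cases, the extension is
continuous across the top; and since pulling back commutes with `∇` and with transposition, the
symmetrized gradient of the extension is the extension of the symmetrized gradient, hence
controlled by it.

The extension vanishes below the slab, so translating it by the width of the slab bounds the field
itself by its normal derivative.
-/

namespace KornSlab

open Filter Topology Set
open scoped ENNReal Interval RealInnerProductSpace

section L2

variable {α F : Type*} [MeasurableSpace α] {μ : Measure α} [NormedAddCommGroup F]

theorem eLpNorm_two_sq (f : α → F) : eLpNorm f 2 μ ^ 2 = ∫⁻ x, ‖f x‖ₑ ^ 2 ∂μ := by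
  simpa using eLpNorm_nnreal_pow_eq_lintegral (f := f) (μ := μ) (p := 2) two_ne_zero

theorem enorm_sq_eq_lintegral (f : Lp F 2 μ) : ‖f‖ₑ ^ 2 = ∫⁻ x, ‖f x‖ₑ ^ 2 ∂μ := by
  rw [Lp.enorm_def, eLpNorm_two_sq]

theorem enorm_integral_sq_le [NormedSpace ℝ F] {f : α → F} (hf : AEStronglyMeasurable f μ) :
    ‖∫ x, f x ∂μ‖ₑ ^ 2 ≤ μ univ * ∫⁻ x, ‖f x‖ₑ ^ 2 ∂μ := by
  have hpow : (μ univ ^ (1 / (2 : ℝ))) ^ 2 = μ univ := by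
    rw [← ENNReal.rpow_natCast, ← ENNReal.rpow_mul]; norm_num
  calc ‖∫ x, f x ∂μ‖ₑ ^ 2
      ≤ eLpNorm f 1 μ ^ 2 := by
        gcongr
        exact (enorm_integral_le_lintegral_enorm f).trans_eq eLpNorm_one_eq_lintegral_enorm.symm
    _ ≤ (eLpNorm f 2 μ * μ univ ^ (1 / (2 : ℝ))) ^ 2 := by
        gcongr
        convert eLpNorm_le_eLpNorm_mul_rpow_measure_univ one_le_two hf using 3
        norm_num
    _ = μ univ * ∫⁻ x, ‖f x‖ₑ ^ 2 ∂μ := by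
        rw [mul_pow, hpow, eLpNorm_two_sq, mul_comm]

theorem lintegral_enorm_integral_sq_le [NormedSpace ℝ F] {β : Type*} [MeasurableSpace β]
    {ν : Measure β} [SFinite μ] [SFinite ν] {g : α × β → F}
    (hg : AEStronglyMeasurable g (μ.prod ν)) :
    ∫⁻ y, ‖∫ x, g (x, y) ∂μ‖ₑ ^ 2 ∂ν ≤ μ univ * ∫⁻ x, ∫⁻ y, ‖g (x, y)‖ₑ ^ 2 ∂ν ∂μ := by
  have hsq : AEMeasurable (fun z ↦ ‖g z‖ₑ ^ 2) (μ.prod ν) := hg.enorm.pow_const 2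
  rw [lintegral_lintegral_swap hsq, ← lintegral_const_mul'' (μ univ)
    (f := fun y ↦ ∫⁻ x, ‖g (x, y)‖ₑ ^ 2 ∂μ) hsq.lintegral_prod_left']
  exact lintegral_mono_ae (hg.prodMk_right.mono fun y hy ↦ enorm_integral_sq_le hy)

theorem memLp_two_iff_lintegral_sq_lt_top {f : α → F} (hf : AEStronglyMeasurable f μ) :
    MemLp f 2 μ ↔ ∫⁻ x, ‖f x‖ₑ ^ 2 ∂μ < ∞ := by
  rw [← eLpNorm_two_sq, ENNReal.pow_lt_top_iff, MemLp]
  simp [hf]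

end L2

section Integral

variable {α F ι : Type*} [MeasurableSpace α] {μ : Measure α} {s : Set α} [NormedAddCommGroup F]

theorem memLp_two_of_integrable_sum_sq [Fintype ι] {g : ι → α → F}
    (hg : ∀ i, AEStronglyMeasurable (g i) μ) (h : Integrable (fun x ↦ ∑ i, ‖g i x‖ ^ 2) μ)
    (i : ι) : MemLp (g i) 2 μ := by
  refine (memLp_two_iff_integrable_sq_norm (hg i)).2
    (h.mono' ((hg i).norm.pow 2) (.of_forall fun x ↦ ?_))
  rw [Real.norm_of_nonneg (sq_nonneg _)]
  exact Finset.single_le_sum (f := fun i ↦ ‖g i x‖ ^ 2) (fun _ _ ↦ sq_nonneg _) (Finset.mem_univ i)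

theorem integral_sum_sum_norm_sq [Fintype ι] {g : ι → ι → α → F} (hg : ∀ i j, MemLp (g i j) 2 μ) :
    ∫ x, ∑ i, ∑ j, ‖g i j x‖ ^ 2 ∂μ = ∑ i, ∑ j, ∫ x, ‖g i j x‖ ^ 2 ∂μ := by
  have hint (i j : ι) : Integrable (fun x ↦ ‖g i j x‖ ^ 2) μ :=
    (hg i j).integrable_norm_pow two_ne_zero
  rw [integral_finsetSum _ fun i _ ↦ integrable_finsetSum _ fun j _ ↦ hint i j]
  exact Finset.sum_congr rfl fun i _ ↦ integral_finsetSum _ fun j _ ↦ hint i j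

theorem norm_toLp_indicator_sq [InnerProductSpace ℝ F] (hs : MeasurableSet s) {g : α → F}
    (hg : MemLp (s.indicator g) 2 μ) : ‖hg.toLp‖ ^ 2 = ∫ x in s, ‖g x‖ ^ 2 ∂μ := by
  rw [← real_inner_self_eq_norm_sq, L2.inner_def, ← integral_indicator hs]
  refine integral_congr_ae ?_
  filter_upwards [hg.coeFn_toLp] with x hx
  rw [hx, real_inner_self_eq_norm_sq]
  by_cases hxs : x ∈ s <;> simp [hxs]

theorem norm_toLp_indicator_add_sq [InnerProductSpace ℝ F] (hs : MeasurableSet s) {g g' : α → F}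
    (hg : MemLp (s.indicator g) 2 μ) (hg' : MemLp (s.indicator g') 2 μ) :
    ‖hg.toLp + hg'.toLp‖ ^ 2 = ∫ x in s, ‖g x + g' x‖ ^ 2 ∂μ := by
  have hadd : MemLp (s.indicator fun x ↦ g x + g' x) 2 μ := by
    rw [indicator_add]
    exact hg.add hg'
  rw [← norm_toLp_indicator_sq hs hadd, ← MemLp.toLp_add]
  congr 2
  exact MemLp.toLp_congr _ _ (.of_eq (indicator_add s g g').symm)

end Integral

section Translation

variable {E F : Type*} [AddCommGroup E] [MeasurableSpace E] [MeasurableAdd E] {μ : Measure E}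
  [μ.IsAddLeftInvariant] [NormedAddCommGroup F]

/-- The translation `u ↦ u (c + ·)`, as an isometry of `Lp`. -/
noncomputable def translate [NormedSpace ℝ F] {p : ℝ≥0∞} [Fact (1 ≤ p)] (c : E) :
    Lp F p μ →ₗᵢ[ℝ] Lp F p μ :=
  Lp.compMeasurePreservingₗᵢ ℝ (c + ·) (measurePreserving_add_left μ c)

theorem translate_eq_vadd [NormedSpace ℝ F] {p : ℝ≥0∞} [Fact (1 ≤ p)] (c : E) (u : Lp F p μ) :
    translate c u = DomAddAct.mk c +ᵥ u :=
  rfl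

theorem coeFn_translate [NormedSpace ℝ F] {p : ℝ≥0∞} [Fact (1 ≤ p)] (c : E) (u : Lp F p μ) :
    translate c u =ᵐ[μ] fun x ↦ u (c + x) :=
  Lp.coeFn_compMeasurePreserving u (measurePreserving_add_left μ c)

theorem coeFn_translate_sub_toLp [NormedSpace ℝ F] {p : ℝ≥0∞} [Fact (1 ≤ p)] (c : E)
    {f : E → F} (hf : MemLp f p μ) :
    translate c (hf.toLp f) - hf.toLp f =ᵐ[μ] fun x ↦ f (c + x) - f x := by
  filter_upwards [Lp.coeFn_sub (translate c (hf.toLp f)) (hf.toLp f),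
    coeFn_translate c (hf.toLp f), hf.coeFn_toLp,
    (measurePreserving_add_left μ c).quasiMeasurePreserving.ae hf.coeFn_toLp] with x h₁ h₂ h₃ h₄
  rw [h₁, Pi.sub_apply, h₂, h₃, h₄]

theorem lintegral_enorm_comp_add_sub_sq [NormedSpace ℝ F] (c : E) {f : E → F} (hf : MemLp f 2 μ) :
    ∫⁻ x, ‖f (c + x) - f x‖ₑ ^ 2 ∂μ = ‖translate c (hf.toLp f) - hf.toLp f‖ₑ ^ 2 := by
  rw [enorm_sq_eq_lintegral]
  refine lintegral_congr_ae ((coeFn_translate_sub_toLp c hf).mono fun x hx ↦ ?_)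
  simp only [hx]

theorem translate_zero [NormedSpace ℝ F] {p : ℝ≥0∞} [Fact (1 ≤ p)] (u : Lp F p μ) :
    translate (0 : E) u = u := by
  simp only [translate_eq_vadd, DomAddAct.mk_zero, zero_vadd]

theorem translate_translate [NormedSpace ℝ F] {p : ℝ≥0∞} [Fact (1 ≤ p)] (c d : E) (u : Lp F p μ) :
    translate c (translate d u) = translate (c + d) u := by
  simp only [translate_eq_vadd, vadd_vadd, add_comm c d, DomAddAct.mk_add]

theorem inner_translate_sub_translate_sub [InnerProductSpace ℝ F] (c d : E) (u w : Lp F 2 μ) :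
    ⟪translate c u - u, translate d w - w⟫ = ⟪translate (-d) u - u, translate (-c) w - w⟫ := by
  have h₁ := (translate (-c - d)).inner_map_map (translate c u) (translate d w)
  have h₂ := (translate (-c)).inner_map_map (translate c u) w
  have h₃ := (translate (-d)).inner_map_map u (translate d w)
  simp only [translate_translate, neg_add_cancel, translate_zero] at h₁ h₂ h₃
  rw [show -c - d + c = -d by abel, show -c - d + d = -c by abel] at h₁
  simp only [inner_sub_left, inner_sub_right, ← h₁, ← h₂, ← h₃]
  ring

end Translation

section HasLpDerivAlong

variable {E F : Type*} [AddCommGroup E] [Module ℝ E] [MeasurableSpace E] [MeasurableAdd E]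
  {μ : Measure E} [μ.IsAddLeftInvariant] [NormedAddCommGroup F]

/-- The `Lp` class `U` is the strong derivative of `u` in the direction `v`: the difference
quotients of `u` along `v` converge to `U` in `Lp`. This plays the role of the weak derivative. -/
def HasLpDerivAlong [NormedSpace ℝ F] {p : ℝ≥0∞} [Fact (1 ≤ p)] (u U : Lp F p μ) (v : E) : Prop :=
  HasDerivAt (fun t : ℝ ↦ translate (t • v) u) U 0

namespace HasLpDerivAlong

section Banach

variable [NormedSpace ℝ F] {p : ℝ≥0∞} [Fact (1 ≤ p)] {u u' U U' : Lp F p μ} {v : E}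

theorem add (hu : HasLpDerivAlong u U v) (hu' : HasLpDerivAlong u' U' v) :
    HasLpDerivAlong (u + u') (U + U') v := by
  unfold HasLpDerivAlong
  simp_rw [map_add]
  exact HasDerivAt.add hu hu'

theorem const_smul (c : ℝ) (hu : HasLpDerivAlong u U v) :
    HasLpDerivAlong (c • u) (c • U) v := by
  unfold HasLpDerivAlong
  simp_rw [map_smul]
  exact HasDerivAt.const_smul c hu

theorem hasDerivAt_translate (hu : HasLpDerivAlong u U v) (t : ℝ) :
    HasDerivAt (fun s : ℝ ↦ translate (s • v) u) (translate (t • v) U) t := by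
  have hshift : HasDerivAt (fun s : ℝ ↦ translate ((s - t) • v) u) U t :=
    HasDerivAt.comp_sub_const t t (by simpa only [HasLpDerivAlong, sub_self] using hu)
  refine ((translate (t • v)).toContinuousLinearMap.hasFDerivAt.comp_hasDerivAt t
    hshift).congr_of_eventuallyEq (.of_forall fun s ↦ ?_)
  simp [translate_translate, ← add_smul]

theorem norm_translate_sub_le (hu : HasLpDerivAlong u U v) (t : ℝ) :
    ‖translate (t • v) u - u‖ ≤ ‖U‖ * |t| := by
  simpa [translate_zero] using convex_univ.norm_image_sub_le_of_norm_hasDerivWithin_le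
    (fun s _ ↦ (hu.hasDerivAt_translate s).hasDerivWithinAt)
    (fun s _ ↦ ((translate (s • v)).norm_map U).le) (mem_univ 0) (mem_univ t)

theorem tendsto_slope (hu : HasLpDerivAlong u U v) :
    Tendsto (fun t : ℝ ↦ t⁻¹ • (translate (t • v) u - u)) (𝓝[≠] 0) (𝓝 U) := by
  simpa [translate_zero] using hasDerivAt_iff_tendsto_slope_zero.1 hu

end Banach

theorem inner_comm [InnerProductSpace ℝ F] {u w Uv Uv' Wv Wv' : Lp F 2 μ} {v v' : E}
    (hu : HasLpDerivAlong u Uv v) (hu' : HasLpDerivAlong u Uv' v')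
    (hw : HasLpDerivAlong w Wv v) (hw' : HasLpDerivAlong w Wv' v') :
    ⟪Uv, Wv'⟫ = ⟪Uv', Wv⟫ := by
  have hneg : Tendsto (fun t : ℝ ↦ -t) (𝓝[≠] 0) (𝓝[≠] 0) := by
    simpa using (hasDerivAt_neg (0 : ℝ)).tendsto_nhdsNE (neg_ne_zero.2 one_ne_zero)
  refine tendsto_nhds_unique (hu.tendsto_slope.inner hw'.tendsto_slope)
    (((hu'.tendsto_slope.comp hneg).inner (hw.tendsto_slope.comp hneg)).congr fun t ↦ ?_)
  simp only [Function.comp_apply, real_inner_smul_left, real_inner_smul_right, neg_smul, inv_neg,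
    inner_translate_sub_translate_sub (t • v) (t • v'), inner_neg_neg]

end HasLpDerivAlong

theorem korn_of_hasLpDerivAlong [InnerProductSpace ℝ F] {ι : Type*} [Fintype ι] {v : ι → E}
    {u : ι → Lp F 2 μ} {U : ι → ι → Lp F 2 μ} (h : ∀ i j, HasLpDerivAlong (u i) (U i j) (v j)) :
    2 * ∑ i, ∑ j, ‖U i j‖ ^ 2 ≤ ∑ i, ∑ j, ‖U i j + U j i‖ ^ 2 := by
  have hcross (i j : ι) : ⟪U i j, U j i⟫ = ⟪U i i, U j j⟫ :=
    (h i j).inner_comm (h i i) (h j j) (h j i)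
  have hdiv : ∑ i, ∑ j, ⟪U i i, U j j⟫ = ‖∑ i, U i i‖ ^ 2 := by
    simp only [← real_inner_self_eq_norm_sq, sum_inner, inner_sum]
    exact Finset.sum_comm
  calc 2 * ∑ i, ∑ j, ‖U i j‖ ^ 2
      ≤ 2 * ∑ i, ∑ j, ‖U i j‖ ^ 2 + 2 * ‖∑ i, U i i‖ ^ 2 := by
        linarith [sq_nonneg ‖∑ i, U i i‖]
    _ = ∑ i, ∑ j, ‖U i j‖ ^ 2 + ∑ i, ∑ j, ‖U j i‖ ^ 2 + 2 * ∑ i, ∑ j, ⟪U i i, U j j⟫ := by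
        rw [hdiv, Finset.sum_comm (f := fun i j ↦ ‖U j i‖ ^ 2)]
        ring
    _ = ∑ i, ∑ j, ‖U i j + U j i‖ ^ 2 := by
        simp only [norm_add_sq_real, hcross, Finset.sum_add_distrib, Finset.mul_sum]
        ring

end HasLpDerivAlong

section Lines

variable {E F : Type*} [NormedAddCommGroup E] [NormedSpace ℝ E] [MeasurableSpace E] [BorelSpace E]
  [SecondCountableTopology E] {μ : Measure E} [SFinite μ] [μ.IsAddLeftInvariant]
  [NormedAddCommGroup F]

theorem aestronglyMeasurable_comp_smul_add {U : E → F} (hU : AEStronglyMeasurable U μ) (v : E)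
    (ν : Measure ℝ) :
    AEStronglyMeasurable (fun z : ℝ × E ↦ U (z.1 • v + z.2)) (ν.prod μ) :=
  hU.comp_quasiMeasurePreserving <| QuasiMeasurePreserving.prod_of_right (by fun_prop) <|
    .of_forall fun t ↦ (measurePreserving_add_left μ (t • v)).quasiMeasurePreserving

theorem ae_intervalIntegrable_comp_smul_add {U : E → F} (hU : MemLp U 2 μ) (v : E) (s : ℝ) :
    ∀ᵐ x ∂μ, IntervalIntegrable (fun t : ℝ ↦ U (t • v + x)) volume 0 s := by
  have hline := aestronglyMeasurable_comp_smul_add hU.1 v (volume.restrict (Ι 0 s))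
  have hsq : AEMeasurable (fun z : ℝ × E ↦ ‖U (z.1 • v + z.2)‖ₑ ^ 2)
    ((volume.restrict (Ι 0 s)).prod μ) := hline.enorm.pow_const 2
  have hfin : ∫⁻ x, (∫⁻ t in Ι 0 s, ‖U (t • v + x)‖ₑ ^ 2) ∂μ < ∞ := by
    rw [← lintegral_lintegral_swap hsq]
    simp only [lintegral_add_left_eq_self (fun x ↦ ‖U x‖ₑ ^ 2), lintegral_const]
    exact ENNReal.mul_lt_top ((memLp_two_iff_lintegral_sq_lt_top hU.1).1 hU) (by simp [uIoc])
  filter_upwards [hline.prodMk_right, ae_lt_top' hsq.lintegral_prod_left' hfin.ne]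
    with x hmeas hlt
  have : IsFiniteMeasure (volume.restrict (Ι 0 s)) := ⟨by simp [uIoc]⟩
  exact intervalIntegrable_iff.2
    (((memLp_two_iff_lintegral_sq_lt_top hmeas).2 hlt).integrable one_le_two)

variable [NormedSpace ℝ F]

/-- On almost every line parallel to `v`, the function `u` is differentiable with derivative `U`
at all but countably many points. -/
def HasDerivOnLines (μ : Measure E) (u U : E → F) (v : E) : Prop :=
  ∀ᵐ x ∂μ, ∃ S : Set ℝ, S.Countable ∧
    ∀ t ∉ S, HasDerivAt (fun s : ℝ ↦ u (s • v + x)) (U (t • v + x)) t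

namespace HasDerivOnLines

variable [CompleteSpace F] {u U : E → F} {v : E}

theorem ae_integral_eq_sub (h : HasDerivOnLines μ u U v) (hcont : Continuous u)
    (hU : MemLp U 2 μ) (s : ℝ) :
    ∀ᵐ x ∂μ, ∫ t in 0..s, U (t • v + x) = u (s • v + x) - u x := by
  filter_upwards [h, ae_intervalIntegrable_comp_smul_add hU v s] with x ⟨S, hS, hderiv⟩ hint
  simpa using integral_eq_of_hasDerivAt_off_countable (fun s : ℝ ↦ u (s • v + x)) _ hS
    (by fun_prop) (fun t ht ↦ hderiv t ht.2) hint

theorem ae_translate_sub_sub_eq_integral (h : HasDerivOnLines μ u U v) (hcont : Continuous u)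
    (hu : MemLp u 2 μ) (hU : MemLp U 2 μ) (s : ℝ) :
    ∀ᵐ x ∂μ, (translate (s • v) (hu.toLp u) - hu.toLp u - s • hU.toLp U) x =
      ∫ t in 0..s, (U (t • v + x) - U x) := by
  filter_upwards [h.ae_integral_eq_sub hcont hU s, ae_intervalIntegrable_comp_smul_add hU v s,
    Lp.coeFn_sub (translate (s • v) (hu.toLp u) - hu.toLp u) (s • hU.toLp U),
    coeFn_translate_sub_toLp (s • v) hu, Lp.coeFn_smul s (hU.toLp U), hU.coeFn_toLp]
    with x hint hintble h₁ h₂ h₃ h₄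
  rw [intervalIntegral.integral_sub hintble intervalIntegrable_const, hint,
    intervalIntegral.integral_const, h₁, Pi.sub_apply, h₂, h₃, Pi.smul_apply, h₄, sub_zero]

theorem norm_translate_sub_sub_le (h : HasDerivOnLines μ u U v) (hcont : Continuous u)
    (hu : MemLp u 2 μ) (hU : MemLp U 2 μ) {s ε : ℝ} (hε : 0 ≤ ε)
    (hosc : ∀ t ∈ Ι 0 s, ‖translate (t • v) (hU.toLp U) - hU.toLp U‖ ≤ ε) :
    ‖translate (s • v) (hu.toLp u) - hu.toLp u - s • hU.toLp U‖ ≤ ε * |s| := by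
  have hmeas : AEStronglyMeasurable (fun z : ℝ × E ↦ U (z.1 • v + z.2) - U z.2)
      ((volume.restrict (Ι 0 s)).prod μ) :=
    (aestronglyMeasurable_comp_smul_add hU.1 v _).sub hU.1.comp_snd
  rw [← ENNReal.ofReal_le_ofReal_iff (by positivity), ofReal_norm,
    ← ENNReal.pow_le_pow_left_iff two_ne_zero]
  calc ‖translate (s • v) (hu.toLp u) - hu.toLp u - s • hU.toLp U‖ₑ ^ 2
      = ∫⁻ x, ‖∫ t in Ι 0 s, (U (t • v + x) - U x)‖ₑ ^ 2 ∂μ := by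
        rw [enorm_sq_eq_lintegral]
        refine lintegral_congr_ae ?_
        filter_upwards [h.ae_translate_sub_sub_eq_integral hcont hu hU s] with x hx
        rw [hx, ← ofReal_norm, intervalIntegral.norm_intervalIntegral_eq, ofReal_norm]
    _ ≤ volume (Ι 0 s) * ∫⁻ t in Ι 0 s, ENNReal.ofReal ε ^ 2 := by
        refine (lintegral_enorm_integral_sq_le hmeas).trans ?_
        rw [Measure.restrict_apply_univ]
        refine mul_le_mul_right (setLIntegral_mono measurable_const fun t ht ↦ ?_) _
        refine (lintegral_enorm_comp_add_sub_sq (t • v) hU).trans_le ?_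
        rw [← ofReal_norm]
        gcongr
        exact hosc t ht
    _ = ENNReal.ofReal (ε * |s|) ^ 2 := by
        rw [setLIntegral_const, Real.volume_uIoc, sub_zero, ENNReal.ofReal_mul hε]
        ring

theorem hasLpDerivAlong [IsLocallyFiniteMeasure μ] [μ.InnerRegularCompactLTTop]
    (h : HasDerivOnLines μ u U v) (hcont : Continuous u) (hu : MemLp u 2 μ) (hU : MemLp U 2 μ) :
    HasLpDerivAlong (hu.toLp u) (hU.toLp U) v := by
  have htrans : Continuous fun t : ℝ ↦ translate (t • v) (hU.toLp U) := by
    have hmk : Continuous fun t : ℝ ↦ DomAddAct.mk (t • v) :=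
      DomAddAct.mkHomeomorph.continuous.comp (by fun_prop)
    have : Fact ((2 : ℝ≥0∞) ≠ ∞) := ⟨ENNReal.ofNat_ne_top⟩
    exact hmk.vadd continuous_const
  refine hasDerivAt_iff_isLittleO_nhds_zero.2 (Asymptotics.isLittleO_iff.2 fun ε hε ↦ ?_)
  obtain ⟨r, hr, hball⟩ := Metric.continuous_iff.1 htrans 0 ε hε
  filter_upwards [Metric.ball_mem_nhds (0 : ℝ) hr] with s hs
  simp only [zero_add, zero_smul, translate_zero, Real.norm_eq_abs]
  refine h.norm_translate_sub_sub_le hcont hu hU hε.le fun t ht ↦ ?_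
  rw [← dist_eq_norm]
  have htr : dist t 0 < r := by
    simpa using (abs_sub_left_of_mem_uIcc (uIoc_subset_uIcc ht)).trans_lt (by simpa using hs)
  simpa [translate_zero] using (hball t htr).le

end HasDerivOnLines

end Lines

section CompLp

variable {α F : Type*} [MeasurableSpace α] {μ : Measure α} {φ : α → α} [NormedAddCommGroup F]
  {p : ℝ≥0∞}

theorem memLp_comp_of_map_le (hφ : Measurable φ) (hle : μ.map φ ≤ μ) {f : α → F}
    (hf : MemLp f p μ) : MemLp (f ∘ φ) p μ :=
  (hf.mono_measure hle).comp_of_map hφ.aemeasurable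

theorem quasiMeasurePreserving_of_map_le (hφ : Measurable φ) (hle : μ.map φ ≤ μ) :
    Measure.QuasiMeasurePreserving φ μ μ :=
  ⟨hφ, hle.absolutelyContinuous⟩

variable [NormedSpace ℝ F]

/-- Composition with a map `φ` that does not increase the measure, as a linear operator on `Lp`. -/
noncomputable def compLp (hφ : Measurable φ) (hle : μ.map φ ≤ μ) : Lp F p μ →ₗ[ℝ] Lp F p μ where
  toFun f := (memLp_comp_of_map_le hφ hle (Lp.memLp f)).toLp
  map_add' f g := by
    rw [← MemLp.toLp_add]
    exact MemLp.toLp_congr _ _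
      ((quasiMeasurePreserving_of_map_le hφ hle).ae_eq_comp (Lp.coeFn_add f g))
  map_smul' c f := by
    rw [RingHom.id_apply, ← MemLp.toLp_const_smul]
    exact MemLp.toLp_congr _ _
      ((quasiMeasurePreserving_of_map_le hφ hle).ae_eq_comp (Lp.coeFn_smul c f))

theorem compLp_toLp (hφ : Measurable φ) (hle : μ.map φ ≤ μ) {f : α → F} (hf : MemLp f p μ) :
    compLp hφ hle (hf.toLp f) = (memLp_comp_of_map_le hφ hle hf).toLp (f ∘ φ) :=
  MemLp.toLp_congr (memLp_comp_of_map_le hφ hle (Lp.memLp _)) _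
    ((quasiMeasurePreserving_of_map_le hφ hle).ae_eq_comp hf.coeFn_toLp)

theorem norm_compLp_le (hφ : Measurable φ) (hle : μ.map φ ≤ μ) (f : Lp F p μ) :
    ‖compLp hφ hle f‖ ≤ ‖f‖ := by
  refine ENNReal.toReal_mono (Lp.eLpNorm_ne_top f) ?_
  calc eLpNorm (compLp hφ hle f) p μ
      = eLpNorm (f ∘ φ) p μ :=
        eLpNorm_congr_ae (memLp_comp_of_map_le hφ hle (Lp.memLp f)).coeFn_toLp
    _ = eLpNorm f p (μ.map φ) :=
        (eLpNorm_map_measure ((Lp.aestronglyMeasurable f).mono_measure hle) hφ.aemeasurable).symm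
    _ ≤ eLpNorm f p μ := eLpNorm_mono_measure _ hle

end CompLp

section Reflection

variable {E F : Type*} [NormedAddCommGroup E] [NormedSpace ℝ E] (ℓ : StrongDual ℝ E) (e : E)
  (a b r : ℝ)

/-- The linear part of `reflect`. -/
noncomputable def reflectLinear : E →L[ℝ] E :=
  .id ℝ E - (1 + r) • ℓ.smulRight e

/-- For `ℓ e = 1`, the affine reflection across the hyperplane `ℓ = b` along `e` that expands
distances to the hyperplane by the factor `r`. -/
noncomputable def reflect (x : E) : E :=
  reflectLinear ℓ e r x + ((1 + r) * b) • e

/-- For `ℓ e = 1` and `0 < r`, the retraction onto the closed slab `a ≤ ℓ ≤ b` that is the identity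
on the slab, `reflect` just above it, and a projection along `e` onto the bottom elsewhere. -/
noncomputable def fold (x : E) : E :=
  x + (max a (min (ℓ x) (ℓ (reflect ℓ e b r x))) - ℓ x) • e

@[fun_prop]
theorem continuous_reflect : Continuous (reflect ℓ e b r) := by
  unfold reflect
  fun_prop

theorem continuous_fold : Continuous (fold ℓ e a b r) := by
  unfold fold
  fun_prop

theorem hasFDerivAt_reflect (x : E) : HasFDerivAt (reflect ℓ e b r) (reflectLinear ℓ e r) x :=
  (reflectLinear ℓ e r).hasFDerivAt.add_const _

theorem reflect_eq_add (x : E) : reflect ℓ e b r x = x + (-(1 + r) * (ℓ x - b)) • e := by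
  simp only [reflect, reflectLinear, sub_apply, ContinuousLinearMap.id_apply,
    smul_apply, ContinuousLinearMap.smulRight_apply]
  module

variable {ℓ e a b r}

theorem ne_zero_of_apply_eq_one (he : ℓ e = 1) : ℓ ≠ 0 := by
  rintro rfl
  simp at he

theorem apply_reflect (he : ℓ e = 1) (x : E) : ℓ (reflect ℓ e b r x) = b - r * (ℓ x - b) := by
  rw [reflect_eq_add, map_add, map_smul, he, smul_eq_mul]
  ring

theorem det_reflectLinear [FiniteDimensional ℝ E] (he : ℓ e = 1) :
    LinearMap.det (reflectLinear ℓ e r : E →ₗ[ℝ] E) = -r := by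
  have htransvection : (reflectLinear ℓ e r : E →ₗ[ℝ] E) =
      LinearMap.transvection (ℓ : E →ₗ[ℝ] ℝ) (-(1 + r) • e) := by
    ext x
    simp only [reflectLinear, LinearMap.transvection.apply, ContinuousLinearMap.coe_coe,
      sub_apply, ContinuousLinearMap.id_apply, smul_apply, ContinuousLinearMap.smulRight_apply]
    module
  rw [htransvection, LinearMap.transvection.det, ContinuousLinearMap.coe_coe, map_smul, he,
    smul_eq_mul]
  ring

theorem apply_fold (he : ℓ e = 1) (x : E) :
    ℓ (fold ℓ e a b r x) = max a (min (ℓ x) (b - r * (ℓ x - b))) := by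
  rw [fold, map_add, map_smul, he, apply_reflect he, smul_eq_mul]
  ring

theorem apply_fold_mem_Icc (he : ℓ e = 1) (hab : a ≤ b) (hr : 0 ≤ r) (x : E) :
    ℓ (fold ℓ e a b r x) ∈ Icc a b := by
  rw [apply_fold he]
  refine ⟨le_max_left _ _, max_le hab ?_⟩
  rcases le_total (ℓ x) b with hx | hx
  · exact (min_le_left _ _).trans hx
  · exact (min_le_right _ _).trans (sub_le_self b (mul_nonneg hr (sub_nonneg.2 hx)))

/-- The open slab `a < ℓ < b`. -/
def slab (ℓ : StrongDual ℝ E) (a b : ℝ) : Set E :=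
  ℓ ⁻¹' Ioo a b

theorem isOpen_slab : IsOpen (slab ℓ a b) :=
  isOpen_Ioo.preimage ℓ.continuous

theorem reflect_notMem_slab (he : ℓ e = 1) (hr : 0 ≤ r) {x : E} (hx : ℓ x ≤ b) :
    reflect ℓ e b r x ∉ slab ℓ a b := by
  intro h
  have := h.2
  rw [apply_reflect he] at this
  nlinarith

theorem comp_fold_eq [AddZeroClass F] {u : E → F} (he : ℓ e = 1) (hr : 0 < r)
    (hu : ∀ x, ℓ x = a → u x = 0) {x : E} (hx : ℓ x ≠ b) :
    u (fold ℓ e a b r x) =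
      (slab ℓ a b).indicator u x + (slab ℓ a b).indicator u (reflect ℓ e b r x) := by
  have hbottom (h : min (ℓ x) (b - r * (ℓ x - b)) ≤ a) : u (fold ℓ e a b r x) = 0 :=
    hu _ (by rw [apply_fold he, max_eq_left h])
  rcases hx.lt_or_gt with hlt | hgt
  · have hmin : min (ℓ x) (b - r * (ℓ x - b)) = ℓ x := min_eq_left (by nlinarith)
    rw [indicator_of_notMem (reflect_notMem_slab he hr.le hlt.le), add_zero]
    rcases le_or_gt (ℓ x) a with hxa | hxa
    · rw [hbottom (hmin.trans_le hxa), indicator_of_notMem fun h ↦ hxa.not_gt h.1]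
    · rw [indicator_of_mem (show x ∈ slab ℓ a b from ⟨hxa, hlt⟩), fold, apply_reflect he, hmin,
        max_eq_right hxa.le, sub_self, zero_smul, add_zero]
  · have hmin : min (ℓ x) (b - r * (ℓ x - b)) = b - r * (ℓ x - b) := min_eq_right (by nlinarith)
    rw [indicator_of_notMem fun h : x ∈ slab ℓ a b ↦ hgt.not_gt h.2, zero_add]
    rcases le_or_gt (b - r * (ℓ x - b)) a with hxa | hxa
    · rw [hbottom (hmin.trans_le hxa), indicator_of_notMem]
      exact fun h ↦ hxa.not_gt (apply_reflect he x ▸ h.1)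
    · have hmem : reflect ℓ e b r x ∈ slab ℓ a b := by
        rw [slab, mem_preimage, apply_reflect he]
        exact ⟨hxa, by nlinarith⟩
      rw [indicator_of_mem hmem, fold, apply_reflect he, hmin, max_eq_right hxa.le, reflect_eq_add]
      congr 3
      ring

theorem hasFDerivAt_indicator_slab [NormedAddCommGroup F] [NormedSpace ℝ F] {u : E → F}
    {U : E → E →L[ℝ] F} (hu : ∀ x ∈ slab ℓ a b, HasFDerivAt u (U x) x) {x : E}
    (hx : ℓ x ∉ ({a, b} : Set ℝ)) :
    HasFDerivAt ((slab ℓ a b).indicator u) ((slab ℓ a b).indicator U x) x := by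
  simp only [mem_insert_iff, mem_singleton_iff, not_or] at hx
  by_cases hmem : x ∈ slab ℓ a b
  · rw [indicator_of_mem hmem]
    exact (hu x hmem).congr_of_eventuallyEq <|
      (eqOn_indicator.eventuallyEq_of_mem (isOpen_slab.mem_nhds hmem))
  · rw [indicator_of_notMem hmem]
    have hout : ℓ x ∈ (Icc a b)ᶜ := fun h ↦
      hmem ⟨h.1.lt_of_ne' hx.1, h.2.lt_of_ne hx.2⟩
    refine (hasFDerivAt_const 0 x).congr_of_eventuallyEq ?_
    filter_upwards [(isClosed_Icc.isOpen_compl.preimage ℓ.continuous).mem_nhds hout] with y hy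
    exact indicator_of_notMem (s := slab ℓ a b) (fun h ↦ hy (Ioo_subset_Icc_self h)) u

theorem hasFDerivAt_comp_fold [NormedAddCommGroup F] [NormedSpace ℝ F] {u : E → F}
    {U : E → E →L[ℝ] F} (he : ℓ e = 1) (hr : 0 < r)
    (hu : ∀ x ∈ slab ℓ a b, HasFDerivAt u (U x) x) (hbottom : ∀ x, ℓ x = a → u x = 0) {x : E}
    (hx : ℓ x ∉ ({a, b} : Set ℝ)) (hx' : b - r * (ℓ x - b) ∉ ({a, b} : Set ℝ)) :
    HasFDerivAt (fun y ↦ u (fold ℓ e a b r y)) ((slab ℓ a b).indicator U x +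
      ((slab ℓ a b).indicator U (reflect ℓ e b r x)).comp (reflectLinear ℓ e r)) x := by
  rw [← apply_reflect he] at hx'
  have hxb : ℓ x ≠ b := fun h ↦ hx (by simp [h])
  refine ((hasFDerivAt_indicator_slab hu hx).add
    ((hasFDerivAt_indicator_slab hu hx').comp x (hasFDerivAt_reflect ℓ e b r x))
    ).congr_of_eventuallyEq ?_
  filter_upwards [ℓ.continuous.continuousAt.eventually_ne hxb] with y hy
  exact comp_fold_eq he hr hbottom hy

end Reflection

section ReflectedExtension

variable {E F : Type*} [NormedAddCommGroup E] [NormedSpace ℝ E] [FiniteDimensional ℝ E]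
  [MeasurableSpace E] [BorelSpace E] {μ : Measure E} [μ.IsAddHaarMeasure]
  [NormedAddCommGroup F] {ℓ : StrongDual ℝ E} {e : E} {a b r : ℝ}

theorem map_reflect_le (he : ℓ e = 1) (hr : 1 ≤ r) : μ.map (reflect ℓ e b r) ≤ μ := by
  have hdet := det_reflectLinear (r := r) he
  have hmap : μ.map (reflect ℓ e b r) = ENNReal.ofReal r⁻¹ • μ := by
    have hcomp : reflect ℓ e b r = (· + ((1 + r) * b) • e) ∘ reflectLinear ℓ e r := rfl
    rw [hcomp, ← Measure.map_map (by fun_prop) (by fun_prop),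
      ← ContinuousLinearMap.coe_coe (reflectLinear ℓ e r),
      Measure.map_linearMap_addHaar_eq_smul_addHaar μ (by rw [hdet]; linarith), hdet,
      Measure.map_smul, map_add_right_eq_self, inv_neg, abs_neg, abs_of_nonneg (by positivity)]
  rw [hmap]
  refine Measure.le_iff.2 fun s _ ↦ ?_
  rw [Measure.smul_apply, smul_eq_mul]
  exact mul_le_of_le_one_left' (ENNReal.ofReal_le_one.2 (inv_le_one_of_one_le₀ hr))

theorem memLp_comp_reflect (he : ℓ e = 1) (b : ℝ) (hr : 1 ≤ r) {f : E → F} (hf : MemLp f 2 μ) :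
    MemLp (f ∘ reflect ℓ e b r) 2 μ :=
  memLp_comp_of_map_le (continuous_reflect ℓ e b r).measurable (map_reflect_le he hr) hf

variable [NormedSpace ℝ F]

/-- Composition with `reflect`, as a linear operator on `L²`. -/
noncomputable def reflectLp (he : ℓ e = 1) (b : ℝ) (hr : 1 ≤ r) : Lp F 2 μ →ₗ[ℝ] Lp F 2 μ :=
  compLp (continuous_reflect ℓ e b r).measurable (map_reflect_le he hr)

theorem reflectLp_toLp (he : ℓ e = 1) (b : ℝ) (hr : 1 ≤ r) {f : E → F} (hf : MemLp f 2 μ) :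
    reflectLp he b hr hf.toLp = (memLp_comp_reflect he b hr hf).toLp :=
  compLp_toLp _ _ hf

theorem norm_reflectLp_le (he : ℓ e = 1) (b : ℝ) (hr : 1 ≤ r) (f : Lp F 2 μ) :
    ‖reflectLp he b hr f‖ ≤ ‖f‖ :=
  norm_compLp_le _ _ f

theorem ae_apply_notMem (hℓ : ℓ ≠ 0) {S : Set ℝ} (hS : S.Countable) : ∀ᵐ x ∂μ, ℓ x ∉ S :=
  (ae_comp_linearMap_mem_iff (ℓ : E →ₗ[ℝ] ℝ) μ volume
    (LinearMap.surjective (by exact_mod_cast hℓ)) hS.measurableSet.compl).2 (hS.ae_notMem volume)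

theorem HasDerivOnLines.of_hasFDerivAt (hℓ : ℓ ≠ 0) {S : Set ℝ} (hS : S.Countable) {u : E → F}
    {U : E → E →L[ℝ] F} (hu : ∀ x, ℓ x ∉ S → HasFDerivAt u (U x) x) (v : E) :
    HasDerivOnLines μ u (fun x ↦ U x v) v := by
  filter_upwards [ae_apply_notMem hℓ hS] with x hx
  refine ⟨{t | ℓ (t • v + x) ∈ S}, ?_, fun t ht ↦ ?_⟩
  · simp only [map_add, map_smul, smul_eq_mul]
    rcases eq_or_ne (ℓ v) 0 with hv | hv
    · simp [hv, hx]
    · exact hS.preimage ((add_left_injective (ℓ x)).comp (mul_left_injective₀ hv))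
  · have hline : HasDerivAt (fun s : ℝ ↦ s • v + x) v t := by
      simpa using ((hasDerivAt_id t).smul_const v).add_const x
    exact (hu _ ht).comp_hasDerivAt t hline

theorem hasDerivOnLines_comp_fold {u : E → F} {U : E → E →L[ℝ] F} (he : ℓ e = 1) (hr : 0 < r)
    (hu : ∀ x ∈ slab ℓ a b, HasFDerivAt u (U x) x) (hbottom : ∀ x, ℓ x = a → u x = 0)
    {v : E} {κ : ℝ} (hv : reflectLinear ℓ e r v = κ • v) :
    HasDerivOnLines μ (fun x ↦ u (fold ℓ e a b r x))
      ((slab ℓ a b).indicator (fun x ↦ U x v) +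
        κ • (slab ℓ a b).indicator (fun x ↦ U x v) ∘ reflect ℓ e b r) v := by
  have hS : (({a, b} : Set ℝ) ∪ (fun s ↦ b - r * (s - b)) ⁻¹' {a, b}).Countable := by
    refine .union (Set.toFinite _).countable (.preimage (Set.toFinite _).countable fun s t hst ↦ ?_)
    simpa [hr.ne'] using hst
  convert HasDerivOnLines.of_hasFDerivAt (μ := μ) (ne_zero_of_apply_eq_one he) hS
    (fun x hx ↦ hasFDerivAt_comp_fold he hr hu hbottom
      (fun h ↦ hx (.inl h)) (fun h ↦ hx (.inr h))) v using 1
  have hindicator (x : E) :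
      (slab ℓ a b).indicator U x v = (slab ℓ a b).indicator (fun x ↦ U x v) x := by
    by_cases hx : x ∈ slab ℓ a b <;> simp [hx]
  ext x
  simp [hv, hindicator]

theorem hasLpDerivAlong_add_reflect [CompleteSpace F] {u : E → F} {U : E → E →L[ℝ] F}
    (he : ℓ e = 1) (hab : a ≤ b) (hr : 1 ≤ r) (hcont : ContinuousOn u (ℓ ⁻¹' Icc a b))
    (hu : ∀ x ∈ slab ℓ a b, HasFDerivAt u (U x) x) (hbottom : ∀ x, ℓ x = a → u x = 0)
    {v : E} {κ : ℝ} (hv : reflectLinear ℓ e r v = κ • v)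
    (hw : MemLp ((slab ℓ a b).indicator u) 2 μ)
    (hW : MemLp ((slab ℓ a b).indicator fun x ↦ U x v) 2 μ) :
    HasLpDerivAlong (hw.toLp + reflectLp he b hr hw.toLp) (hW.toLp + κ • reflectLp he b hr hW.toLp)
      v := by
  have hr₀ : 0 < r := one_pos.trans_le hr
  have hw' := hw.add (memLp_comp_reflect he b hr hw)
  have hW' := hW.add ((memLp_comp_reflect he b hr hW).const_smul κ)
  have hfold : (slab ℓ a b).indicator u + (slab ℓ a b).indicator u ∘ reflect ℓ e b r =ᵐ[μ]
      fun x ↦ u (fold ℓ e a b r x) := by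
    filter_upwards [ae_apply_notMem (ne_zero_of_apply_eq_one he) (countable_singleton b)] with x hx
    exact (comp_fold_eq he hr₀ hbottom hx).symm
  have hcont_fold : Continuous fun x ↦ u (fold ℓ e a b r x) :=
    hcont.comp_continuous (continuous_fold ℓ e a b r) (apply_fold_mem_Icc he hab hr₀.le)
  convert (hasDerivOnLines_comp_fold he hr₀ hu hbottom hv).hasLpDerivAlong hcont_fold
    (hw'.ae_eq hfold) hW' using 1
  · rw [reflectLp_toLp, ← MemLp.toLp_add]
    exact MemLp.toLp_congr _ _ hfold
  · rw [reflectLp_toLp, ← MemLp.toLp_const_smul, ← MemLp.toLp_add]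

end ReflectedExtension

section NitscheExtension

variable {E F : Type*} [NormedAddCommGroup E] [NormedSpace ℝ E] [FiniteDimensional ℝ E]
  [MeasurableSpace E] [BorelSpace E] {μ : Measure E} [μ.IsAddHaarMeasure]
  [NormedAddCommGroup F] [NormedSpace ℝ F] {ℓ : StrongDual ℝ E} {e : E} {a b : ℝ} {κ : ℝ → ℝ}

/-- Nitsche's combination of the two reflections with ratios `1` and `2`. A component of a tensor
field that `reflect ℓ e b r` multiplies by `κ r` is extended with this same `κ`. -/
noncomputable def nitscheExt (he : ℓ e = 1) (b : ℝ) (κ : ℝ → ℝ) : Lp F 2 μ →ₗ[ℝ] Lp F 2 μ :=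
  .id + (3 * κ 1) • reflectLp he b le_rfl - (2 * κ 2) • reflectLp he b one_le_two

theorem nitscheExt_apply (he : ℓ e = 1) (f : Lp F 2 μ) :
    nitscheExt he b κ f =
      f + (3 * κ 1) • reflectLp he b le_rfl f - (2 * κ 2) • reflectLp he b one_le_two f :=
  rfl

theorem norm_nitscheExt_le (he : ℓ e = 1) (f : Lp F 2 μ) :
    ‖nitscheExt he b κ f‖ ≤ (1 + 3 * |κ 1| + 2 * |κ 2|) * ‖f‖ := by
  calc ‖nitscheExt he b κ f‖
      ≤ ‖f‖ + ‖(3 * κ 1) • reflectLp he b le_rfl f‖ + ‖(2 * κ 2) • reflectLp he b one_le_two f‖ :=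
        (norm_sub_le _ _).trans (add_le_add_left (norm_add_le _ _) _)
    _ ≤ ‖f‖ + 3 * |κ 1| * ‖f‖ + 2 * |κ 2| * ‖f‖ := by
        simp only [norm_smul, norm_mul, Real.norm_eq_abs, Nat.abs_ofNat]
        gcongr <;> exact norm_reflectLp_le he b _ f
    _ = (1 + 3 * |κ 1| + 2 * |κ 2|) * ‖f‖ := by ring

theorem ae_nitscheExt_eq_of_le (he : ℓ e = 1) {f : E → F}
    (hf : MemLp ((slab ℓ a b).indicator f) 2 μ) :
    ∀ᵐ x ∂μ, ℓ x ≤ b → nitscheExt he b κ hf.toLp x = (slab ℓ a b).indicator f x := by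
  have h₁ := memLp_comp_reflect he b le_rfl hf
  have h₂ := memLp_comp_reflect he b one_le_two hf
  have heq : nitscheExt he b κ hf.toLp =
      ((hf.add (h₁.const_smul (3 * κ 1))).sub (h₂.const_smul (2 * κ 2))).toLp := by
    rw [nitscheExt_apply, reflectLp_toLp, reflectLp_toLp]
    rfl
  rw [heq]
  filter_upwards [MemLp.coeFn_toLp ((hf.add (h₁.const_smul (3 * κ 1))).sub
    (h₂.const_smul (2 * κ 2)))] with x hx hxb
  rw [hx]
  simp [indicator_of_notMem (reflect_notMem_slab he zero_le_one hxb),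
    indicator_of_notMem (reflect_notMem_slab he zero_le_two hxb)]

theorem norm_toLp_le_norm_nitscheExt (he : ℓ e = 1) {f : E → F}
    (hf : MemLp ((slab ℓ a b).indicator f) 2 μ) : ‖hf.toLp‖ ≤ ‖nitscheExt he b κ hf.toLp‖ := by
  refine Lp.norm_le_norm_of_ae_le ?_
  filter_upwards [hf.coeFn_toLp, ae_nitscheExt_eq_of_le (κ := κ) he hf] with x hx hext
  by_cases hmem : x ∈ slab ℓ a b
  · rw [hx, hext hmem.2.le]
  · simp [hx, hmem]

theorem norm_toLp_le_of_hasLpDerivAlong_nitscheExt (he : ℓ e = 1) (hab : a ≤ b) {f : E → F}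
    (hf : MemLp ((slab ℓ a b).indicator f) 2 μ) {G : Lp F 2 μ}
    (hG : HasLpDerivAlong (nitscheExt he b κ hf.toLp) G e) : ‖hf.toLp‖ ≤ (b - a) * ‖G‖ := by
  set u := nitscheExt he b κ hf.toLp
  have hext := ae_nitscheExt_eq_of_le (κ := κ) he hf
  have hshift := (measurePreserving_add_left μ ((-(b - a)) • e)).quasiMeasurePreserving.ae hext
  calc ‖hf.toLp‖ ≤ ‖translate ((-(b - a)) • e) u - u‖ := by
        refine Lp.norm_le_norm_of_ae_le ?_
        filter_upwards [hf.coeFn_toLp, hext, hshift, coeFn_translate ((-(b - a)) • e) u,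
          Lp.coeFn_sub (translate ((-(b - a)) • e) u) u] with x hx hux hux' htr hsub
        by_cases hmem : x ∈ slab ℓ a b
        · have hbelow : ℓ ((-(b - a)) • e + x) ≤ a := by
            have := hmem.2
            simp only [map_add, map_smul, he, smul_eq_mul]
            linarith
          have hnotMem : (-(b - a)) • e + x ∉ slab ℓ a b := fun h ↦ hbelow.not_gt h.1
          rw [hsub, Pi.sub_apply, htr, hux' (hbelow.trans hab), hux hmem.2.le,
            indicator_of_notMem hnotMem, hx, zero_sub, norm_neg]
        · simp [hx, hmem]
    _ ≤ ‖G‖ * |-(b - a)| := hG.norm_translate_sub_le _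
    _ = (b - a) * ‖G‖ := by rw [abs_neg, abs_of_nonneg (sub_nonneg.2 hab), mul_comm]

theorem hasLpDerivAlong_nitscheExt [CompleteSpace F] {u : E → F} {U : E → E →L[ℝ] F}
    (he : ℓ e = 1) (hab : a ≤ b) (hcont : ContinuousOn u (ℓ ⁻¹' Icc a b))
    (hu : ∀ x ∈ slab ℓ a b, HasFDerivAt u (U x) x) (hbottom : ∀ x, ℓ x = a → u x = 0)
    (hκ : 3 * κ 1 - 2 * κ 2 = 1) {v : E} {κ' : ℝ → ℝ}
    (hv : ∀ r, reflectLinear ℓ e r v = κ' r • v)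
    (hw : MemLp ((slab ℓ a b).indicator u) 2 μ)
    (hW : MemLp ((slab ℓ a b).indicator fun x ↦ U x v) 2 μ) :
    HasLpDerivAlong (nitscheExt he b κ hw.toLp) (nitscheExt he b (κ * κ') hW.toLp) v := by
  have h₁ := hasLpDerivAlong_add_reflect he hab le_rfl hcont hu hbottom (hv 1) hw hW
  have h₂ := hasLpDerivAlong_add_reflect he hab one_le_two hcont hu hbottom (hv 2) hw hW
  convert (h₁.const_smul (3 * κ 1)).add (h₂.const_smul (-(2 * κ 2))) using 1
  · rw [nitscheExt_apply]
    match_scalars <;> linarith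
  · rw [nitscheExt_apply, Pi.mul_apply, Pi.mul_apply]
    match_scalars <;> linarith

end NitscheExtension

section ReflectScale

variable {ι E F : Type*} [DecidableEq ι] [NormedAddCommGroup E] [NormedSpace ℝ E]
  {ℓ : StrongDual ℝ E} {v : ι → E} {m : ι} {a b : ℝ}

/-- The factor by which `reflect ℓ (v m) b r` multiplies the direction `v j`, when `ℓ (v m) = 1` and
the other `v j` are parallel to the slab. -/
def reflectScale (m j : ι) (r : ℝ) : ℝ :=
  if j = m then -r else 1

theorem reflectLinear_apply_of_parallel (hm : ℓ (v m) = 1) (hv : ∀ j ≠ m, ℓ (v j) = 0) (j : ι)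
    (r : ℝ) : reflectLinear ℓ (v m) r (v j) = reflectScale m j r • v j := by
  simp only [reflectLinear, reflectScale, sub_apply, ContinuousLinearMap.id_apply, smul_apply,
    ContinuousLinearMap.smulRight_apply]
  split_ifs with hj
  · rw [hj, hm]
    module
  · rw [hv j hj]
    module

theorem three_mul_reflectScale_sub_two_mul (m j : ι) :
    3 * reflectScale m j 1 - 2 * reflectScale m j 2 = 1 := by
  unfold reflectScale
  split_ifs <;> norm_num

theorem abs_reflectScale_le (m j : ι) {r : ℝ} (hr : 1 ≤ r) : |reflectScale m j r| ≤ r := by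
  unfold reflectScale
  split_ifs
  · rw [abs_neg, abs_of_nonneg (zero_le_one.trans hr)]
  · rwa [abs_one]

variable [FiniteDimensional ℝ E] [MeasurableSpace E] [BorelSpace E] {μ : Measure E}
  [μ.IsAddHaarMeasure] [NormedAddCommGroup F] [InnerProductSpace ℝ F]

theorem norm_nitscheExt_reflectScale_mul_le (hm : ℓ (v m) = 1) (i j : ι) (f : Lp F 2 μ) :
    ‖nitscheExt hm b (reflectScale m i * reflectScale m j) f‖ ≤ 12 * ‖f‖ := by
  have hscale (r : ℝ) (hr : 1 ≤ r) : |(reflectScale m i * reflectScale m j) r| ≤ r * r := by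
    rw [Pi.mul_apply, abs_mul]
    gcongr <;> exact abs_reflectScale_le m _ hr
  refine (norm_nitscheExt_le hm f).trans ?_
  gcongr
  linarith [hscale 1 le_rfl, hscale 2 one_le_two]

theorem sum_norm_nitscheExt_sq_le [Fintype ι] (hm : ℓ (v m) = 1) {f : ι → Lp F 2 μ}
    {g : ι → ι → Lp F 2 μ}
    (h : ∀ i j, HasLpDerivAlong (nitscheExt hm b (reflectScale m i) (f i))
      (nitscheExt hm b (reflectScale m i * reflectScale m j) (g i j)) (v j)) :
    ∑ i, ∑ j, ‖nitscheExt hm b (reflectScale m i * reflectScale m j) (g i j)‖ ^ 2 ≤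
      72 * ∑ i, ∑ j, ‖g i j + g j i‖ ^ 2 := by
  have hsymm : ∑ i, ∑ j, ‖nitscheExt hm b (reflectScale m i * reflectScale m j) (g i j) +
      nitscheExt hm b (reflectScale m j * reflectScale m i) (g j i)‖ ^ 2 ≤
        ∑ i, ∑ j, (12 * ‖g i j + g j i‖) ^ 2 := by
    gcongr with i _ j _
    rw [mul_comm (reflectScale m j), ← map_add]
    exact norm_nitscheExt_reflectScale_mul_le hm i j _
  simp only [mul_pow, ← Finset.mul_sum] at hsymm
  linarith [korn_of_hasLpDerivAlong h]

theorem hasLpDerivAlong_nitscheExt_reflectScale [CompleteSpace F] {u : ι → E → F}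
    {U : ι → E → E →L[ℝ] F} (hm : ℓ (v m) = 1) (hv : ∀ j ≠ m, ℓ (v j) = 0)
    (hab : a ≤ b) (hcont : ∀ i, ContinuousOn (u i) (ℓ ⁻¹' Icc a b))
    (hu : ∀ i, ∀ x ∈ slab ℓ a b, HasFDerivAt (u i) (U i x) x)
    (hbottom : ∀ i x, ℓ x = a → u i x = 0)
    (hw : ∀ i, MemLp ((slab ℓ a b).indicator (u i)) 2 μ)
    (hW : ∀ i j, MemLp ((slab ℓ a b).indicator fun x ↦ U i x (v j)) 2 μ) (i j : ι) :
    HasLpDerivAlong (nitscheExt hm b (reflectScale m i) (hw i).toLp)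
      (nitscheExt hm b (reflectScale m i * reflectScale m j) (hW i j).toLp) (v j) :=
  hasLpDerivAlong_nitscheExt hm hab (hcont i) (hu i) (hbottom i)
    (three_mul_reflectScale_sub_two_mul m i) (reflectLinear_apply_of_parallel hm hv j) (hw i)
    (hW i j)

end ReflectScale

theorem sqrt_add_sqrt_le {A B C d : ℝ} (hd : 0 ≤ d) (hA : A ≤ d ^ 2 * C) (hB : B ≤ C) :
    √A + √B ≤ (d + 1) * √C := by
  calc √A + √B ≤ √(d ^ 2 * C) + √C := by gcongr
    _ = (d + 1) * √C := by rw [Real.sqrt_mul (sq_nonneg d), Real.sqrt_sq hd]; ring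

section Slab

variable {ι E F : Type*} [Fintype ι] [NormedAddCommGroup E] [NormedSpace ℝ E]
  [FiniteDimensional ℝ E] [MeasurableSpace E] [BorelSpace E] {μ : Measure E} [μ.IsAddHaarMeasure]
  [NormedAddCommGroup F] [InnerProductSpace ℝ F] [CompleteSpace F] {ℓ : StrongDual ℝ E}
  {v : ι → E} {m : ι} {a b : ℝ} {u : ι → E → F} {U : ι → E → E →L[ℝ] F}

theorem korn_slab_toLp (hm : ℓ (v m) = 1) (hv : ∀ j ≠ m, ℓ (v j) = 0)
    (hab : a ≤ b) (hcont : ∀ i, ContinuousOn (u i) (ℓ ⁻¹' Icc a b))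
    (hu : ∀ i, ∀ x ∈ slab ℓ a b, HasFDerivAt (u i) (U i x) x)
    (hbottom : ∀ i x, ℓ x = a → u i x = 0)
    (hw : ∀ i, MemLp ((slab ℓ a b).indicator (u i)) 2 μ)
    (hW : ∀ i j, MemLp ((slab ℓ a b).indicator fun x ↦ U i x (v j)) 2 μ) :
    ∑ i, ‖(hw i).toLp‖ ^ 2 ≤
        (b - a) ^ 2 * (72 * ∑ i, ∑ j, ‖(hW i j).toLp + (hW j i).toLp‖ ^ 2) ∧
      ∑ i, ∑ j, ‖(hW i j).toLp‖ ^ 2 ≤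
        72 * ∑ i, ∑ j, ‖(hW i j).toLp + (hW j i).toLp‖ ^ 2 := by
  classical
  let ext (i j : ι) := nitscheExt hm b (reflectScale m i * reflectScale m j) (hW i j).toLp
  have hderiv := hasLpDerivAlong_nitscheExt_reflectScale hm hv hab hcont hu hbottom hw hW
  have hkorn := sum_norm_nitscheExt_sq_le hm hderiv
  refine ⟨le_trans ?_ (mul_le_mul_of_nonneg_left hkorn (sq_nonneg _)), le_trans ?_ hkorn⟩
  · rw [Finset.mul_sum]
    refine Finset.sum_le_sum fun i _ ↦ ?_
    calc ‖(hw i).toLp‖ ^ 2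
        ≤ ((b - a) * ‖ext i m‖) ^ 2 := by
          gcongr
          exact norm_toLp_le_of_hasLpDerivAlong_nitscheExt hm hab (hw i) (hderiv i m)
      _ ≤ (b - a) ^ 2 * ∑ j, ‖ext i j‖ ^ 2 := by
          rw [mul_pow]
          gcongr
          exact Finset.single_le_sum (f := fun j ↦ ‖ext i j‖ ^ 2) (fun j _ ↦ sq_nonneg _)
            (Finset.mem_univ m)
  · gcongr with i _ j _
    exact norm_toLp_le_norm_nitscheExt hm (hW i j)

theorem korn_slab (hm : ℓ (v m) = 1) (hv : ∀ j ≠ m, ℓ (v j) = 0)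
    (hab : a ≤ b) (hcont : ∀ i, ContinuousOn (u i) (ℓ ⁻¹' Icc a b))
    (hu : ∀ i, ∀ x ∈ slab ℓ a b, HasFDerivAt (u i) (U i x) x)
    (hbottom : ∀ i x, ℓ x = a → u i x = 0)
    (hw : ∀ i, MemLp (u i) 2 (μ.restrict (slab ℓ a b)))
    (hW : ∀ i j, MemLp (fun x ↦ U i x (v j)) 2 (μ.restrict (slab ℓ a b))) :
    √(∫ x in slab ℓ a b, ∑ i, ‖u i x‖ ^ 2 ∂μ) +
        √(∫ x in slab ℓ a b, ∑ i, ∑ j, ‖U i x (v j)‖ ^ 2 ∂μ) ≤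
      √72 * (b - a + 1) *
        √(∫ x in slab ℓ a b, ∑ i, ∑ j, ‖U i x (v j) + U j x (v i)‖ ^ 2 ∂μ) := by
  have hs : MeasurableSet (slab ℓ a b) := isOpen_slab.measurableSet
  have hkorn := korn_slab_toLp hm hv hab hcont hu hbottom
    (fun i ↦ (memLp_indicator_iff_restrict hs).2 (hw i))
    (fun i j ↦ (memLp_indicator_iff_restrict hs).2 (hW i j))
  simp only [norm_toLp_indicator_sq hs, norm_toLp_indicator_add_sq hs] at hkorn
  have hsymm (i j : ι) :
      MemLp (fun x ↦ U i x (v j) + U j x (v i)) 2 (μ.restrict (slab ℓ a b)) :=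
    (hW i j).add (hW j i)
  rw [integral_finsetSum _ fun i _ ↦ (hw i).integrable_norm_pow two_ne_zero,
    integral_sum_sum_norm_sq hW, integral_sum_sum_norm_sq hsymm]
  refine (sqrt_add_sqrt_le (sub_nonneg.2 hab) hkorn.1 hkorn.2).trans_eq ?_
  rw [Real.sqrt_mul (by norm_num)]
  ring

end Slab

end KornSlab

theorem stmt_8_general {n : ℕ} (m : Fin n) {a b : ℝ} (hab : a ≤ b)
    {f : EuclideanSpace ℝ (Fin n) → EuclideanSpace ℝ (Fin n)}
    (hdiff : DifferentiableOn ℝ f {x | a < x m ∧ x m < b})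
    (hcont : ContinuousOn f {x | a ≤ x m ∧ x m ≤ b}) (hbottom : ∀ x, x m = a → f x = 0)
    (hf : IntegrableOn (fun x ↦ ‖f x‖ ^ 2) {x | a < x m ∧ x m < b})
    (hgrad : IntegrableOn (fun x ↦ ∑ i, ∑ j, pderivK f i j x ^ 2) {x | a < x m ∧ x m < b}) :
    √(∫ x in {x | a < x m ∧ x m < b}, ‖f x‖ ^ 2) +
        √(∫ x in {x | a < x m ∧ x m < b}, ∑ i, ∑ j, pderivK f i j x ^ 2) ≤
      √72 * (b - a + 1) *
        √(∫ x in {x | a < x m ∧ x m < b}, ∑ i, ∑ j, (pderivK f i j x + pderivK f j i x) ^ 2) := by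
  have hopen : IsOpen {x : EuclideanSpace ℝ (Fin n) | a < x m ∧ x m < b} :=
    KornSlab.isOpen_slab (ℓ := EuclideanSpace.proj m)
  have hcoord (i : Fin n) : ContinuousOn (fun x ↦ f x i) {x | a ≤ x m ∧ x m ≤ b} :=
    (EuclideanSpace.proj i).continuous.comp_continuousOn hcont
  have hderiv (i : Fin n) (x) (hx : a < x m ∧ x m < b) :
      HasFDerivAt (fun y ↦ f y i) (fderiv ℝ (fun y ↦ f y i) x) x :=
    (differentiableAt_euclidean.1 (hdiff.differentiableAt (hopen.mem_nhds hx)) i).hasFDerivAt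
  have hw := KornSlab.memLp_two_of_integrable_sum_sq (g := fun i x ↦ f x i)
    (fun i ↦ ((hcoord i).mono fun x hx ↦ ⟨hx.1.le, hx.2.le⟩).aestronglyMeasurable
      hopen.measurableSet) (by simpa only [EuclideanSpace.norm_sq_eq, IntegrableOn] using hf)
  have hW := KornSlab.memLp_two_of_integrable_sum_sq (g := fun (ij : Fin n × Fin n) x ↦
      pderivK f ij.1 ij.2 x)
    (fun ij ↦ (measurable_fderiv_apply_const ℝ _ _).aestronglyMeasurable)
    (by simpa only [Fintype.sum_prod_type, Real.norm_eq_abs, sq_abs, IntegrableOn] using hgrad)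
  have hkorn := KornSlab.korn_slab (ℓ := EuclideanSpace.proj m)
    (v := fun j ↦ EuclideanSpace.single j 1) (m := m) (by simp) (by simp +contextual) hab hcoord
    hderiv (fun i x hx ↦ by simp [hbottom x hx]) hw fun i j ↦ hW (i, j)
  simp only [Real.norm_eq_abs, sq_abs] at hkorn
  simp only [EuclideanSpace.norm_sq_eq, Real.norm_eq_abs, sq_abs]
  exact hkorn

/-- **Korn's inequality on a slab.** Let `V = ℝ^{n-1} × (a,b)` (realized as
the slab `{x ∈ ℝⁿ : a < xₙ < b}`).  There is a constant `c > 0` depending only on `b − a`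
and `n` such that for every `f ∈ H¹(V; ℝⁿ)` (here: everywhere differentiable with `f` and
`∇f` square integrable on `V`) whose trace on `{xₙ = a}` vanishes,
`‖f‖_{L²} + ‖∇f‖_{L²} ≤ c ‖𝔻f‖_{L²}` where `𝔻f = ∇f + (∇f)ᵀ`. -/
theorem stmt_8 (n : ℕ) (hn : 0 < n) (δ : ℝ) (hδ : 0 < δ) :
    ∃ c : ℝ, 0 < c ∧
      ∀ (a b : ℝ), b - a = δ →
        ∀ f : EuclideanSpace ℝ (Fin n) → EuclideanSpace ℝ (Fin n),
          Differentiable ℝ f →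
          (∀ x, x ⟨n - 1, by omega⟩ = a → f x = 0) →
          IntegrableOn (fun x => ‖f x‖ ^ 2)
            {x : EuclideanSpace ℝ (Fin n) | a < x ⟨n - 1, by omega⟩ ∧ x ⟨n - 1, by omega⟩ < b} →
          IntegrableOn (fun x => ∑ i, ∑ j, (pderivK f i j x) ^ 2)
            {x : EuclideanSpace ℝ (Fin n) | a < x ⟨n - 1, by omega⟩ ∧ x ⟨n - 1, by omega⟩ < b} →
          Real.sqrt (∫ x in {x : EuclideanSpace ℝ (Fin n) |
                a < x ⟨n - 1, by omega⟩ ∧ x ⟨n - 1, by omega⟩ < b}, ‖f x‖ ^ 2) +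
            Real.sqrt (∫ x in {x : EuclideanSpace ℝ (Fin n) |
                a < x ⟨n - 1, by omega⟩ ∧ x ⟨n - 1, by omega⟩ < b},
                ∑ i, ∑ j, (pderivK f i j x) ^ 2) ≤
          c * Real.sqrt (∫ x in {x : EuclideanSpace ℝ (Fin n) |
                a < x ⟨n - 1, by omega⟩ ∧ x ⟨n - 1, by omega⟩ < b},
                ∑ i, ∑ j, (pderivK f i j x + pderivK f j i x) ^ 2) := by
  refine ⟨√72 * (δ + 1), by positivity, fun a b hab f hdiff hbottom hf hgrad ↦ hab ▸ ?_⟩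
  exact stmt_8_general _ (sub_nonneg.1 (hab ▸ hδ.le)) hdiff.differentiableOn
    hdiff.continuous.continuousOn hbottom hf hgrad
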